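/- arXiv:2506.23335 — 2 statements merged into one kernel-verified Lean document; each statement's English description precedes it below -/
import Mathlib

section
/- For every real number x, exp(x) ≤ x + exp(9x²/16). -/
theorem aux_exp_lower (y : ℝ) (hy : 0 ≤ y) :
    1 + y + y^2/2 + y^3/6 + y^4/24 ≤ Real.exp y := by
  have h := Real.sum_le_exp_of_nonneg hy 5
  norm_num [Finset.sum_range_succ, Nat.factorial] at h
  linarith

theorem aux_exp_upper (x : ℝ) (h0 : 0 ≤ x) (h1 : x ≤ 1) :
    Real.exp x ≤ 1 + x + x^2/2 + x^3/6 + x^4/24 + x^5/120 + x^6*7/4320 := by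
  have h := Real.exp_bound' h0 h1 (n := 6) (by norm_num)
  norm_num [Finset.sum_range_succ, Nat.factorial] at h
  linarith

theorem exp_le_add_exp_sq (x : ℝ) : Real.exp x ≤ x + Real.exp (9 * x ^ 2 / 16) := by
  have hy : 0 ≤ 9 * x ^ 2 / 16 := by positivity
  have hL := aux_exp_lower _ hy
  rcases le_total x 0 with h | h
  · have h1 := Real.quadratic_le_exp_of_nonneg (x := -x) (by linarith)
    have h2 : Real.exp x * Real.exp (-x) = 1 := by rw [← Real.exp_add]; simp
    have h3 : Real.exp x ≤ 1 + x + x^2/2 := by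
      have hp : 0 < 1 + x + x^2/2 := by nlinarith [sq_nonneg (x+1)]
      have h4 : 1 ≤ (1 + x + x^2/2) * Real.exp (-x) := by
        have := mul_le_mul_of_nonneg_left h1 hp.le
        nlinarith [sq_nonneg (x^2)]
      exact le_of_mul_le_mul_right (h2.le.trans h4) (Real.exp_pos _)
    nlinarith [Real.add_one_le_exp (9 * x ^ 2 / 16), sq_nonneg x]
  rcases le_total x 1 with h1 | h1
  · have hU := aux_exp_upper x h h1
    have key : 0 ≤ 1/16 - x/6 + x^2*(81/512-1/24) - x^3/120 + x^4*(729/24576-7/4320) := by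
      nlinarith [sq_nonneg (x^2 + x/2 - 2/3), sq_nonneg (x - 3/5), sq_nonneg (x*(x-3/5)), mul_nonneg h (sq_nonneg (x-3/5)), sq_nonneg (x^2)]
    have := mul_nonneg (sq_nonneg x) key
    have h8 : 0 ≤ x^8 := by positivity
    nlinarith
  rcases le_total (16/9) x with h2 | h2
  · have : Real.exp x ≤ Real.exp (9 * x ^ 2 / 16) := Real.exp_le_exp.2 (by nlinarith)
    linarith
  · obtain ⟨t, rfl⟩ : ∃ t, x = 1 + t := ⟨x - 1, by ring⟩
    have ht : 0 ≤ t := by linarith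
    have ht1 : t ≤ 7/9 := by linarith
    have hU := aux_exp_upper t ht (by linarith)
    have he : Real.exp (1 + t) ≤ 2.7182818286 * (1 + t + t^2/2 + t^3/6 + t^4/24 + t^5/120 + t^6*7/4320) := by
      rw [Real.exp_add]
      exact mul_le_mul Real.exp_one_lt_d9.le hU (Real.exp_pos _).le (by norm_num)
    refine he.trans (le_trans ?_ (add_le_add_right hL _))
    have a2 := pow_nonneg ht 2
    have a3 := pow_nonneg ht 3
    have a4 := pow_nonneg ht 4
    have a5 := pow_nonneg ht 5
    have a6 := pow_nonneg ht 6
    have a7 := pow_nonneg ht 7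
    have a8 := pow_nonneg ht 8
    ring_nf
    nlinarith
end

section
/- Let (Ω, F, P) be a probability space with a filtration {F_k}_{k∈ℕ₊}, and let {A_k}_{k∈ℕ₊} be events with A_k ∈ F_k for each k. Let β ∈ (0,1) and suppose that for every almost surely finite stopping time τ taking values in ℕ₊ with respect to the filtration {F_k}, P({ω : ω ∈ A_{τ(ω)}}) ≥ 1 − β. Then P(∩_{k∈ℕ₊} A_k) ≥ 1 − β. -/
open MeasureTheory

theorem prob_iInter_of_prob_event_at_stopping_times
    {Ω : Type*} [m : MeasurableSpace Ω] (μ : Measure Ω) [IsProbabilityMeasure μ]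
    (F : ℕ+ → MeasurableSpace Ω) (hF_mono : Monotone F) (hF_le : ∀ k, F k ≤ m)
    (A : ℕ+ → Set Ω) (hA : ∀ k, MeasurableSet[F k] (A k))
    (β : ℝ) (hβ : β ∈ Set.Ioo (0 : ℝ) 1)
    (h : ∀ τ : Ω → WithTop ℕ+,
      (∀ k : ℕ+, MeasurableSet[F k] {ω | τ ω = (k : WithTop ℕ+)}) →
      μ {ω | τ ω ≠ ⊤} = 1 →
      ENNReal.ofReal (1 - β) ≤ μ {ω | ∃ k : ℕ+, τ ω = (k : WithTop ℕ+) ∧ ω ∈ A k}) :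
    ENNReal.ofReal (1 - β) ≤ μ (⋂ k : ℕ+, A k) := by
  classical
  have key : ∀ N : ℕ+, ENNReal.ofReal (1 - β) ≤ μ {ω | ∀ k ≤ N, ω ∈ A k} := by
    intro N
    have hex : ∀ ω : Ω, ∃ k : ℕ+, k = N ∨ ω ∉ A k := fun ω => ⟨N, Or.inl rfl⟩
    have hfind : ∀ (ω : Ω) (k : ℕ+), ((PNat.find (hex ω) : ℕ+) : WithTop ℕ+) = (k : WithTop ℕ+) ↔
        (k = N ∨ ω ∉ A k) ∧ ∀ j < k, ¬ (j = N ∨ ω ∉ A j) := by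
      intro ω k
      rw [WithTop.coe_inj, PNat.find_eq_iff]
    refine (h (fun ω => ((PNat.find (hex ω) : ℕ+) : WithTop ℕ+)) ?_ ?_).trans (measure_mono ?_)
    · intro k
      have hset : {ω | ((PNat.find (hex ω) : ℕ+) : WithTop ℕ+) = (k : WithTop ℕ+)} =
          ({ω | k = N} ∪ (A k)ᶜ) ∩ ⋂ j : ℕ+, ⋂ _ : j < k, ({ω | j = N} ∪ (A j)ᶜ)ᶜ := by
        ext ω
        simp only [Set.mem_ofPred_eq, hfind, Set.mem_inter_iff, Set.mem_union, Set.mem_iInter,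
          Set.mem_compl_iff]
      rw [hset]
      refine MeasurableSet.inter ((MeasurableSet.const _).union (hA k).compl) ?_
      refine MeasurableSet.iInter fun j => MeasurableSet.iInter fun hj => ?_
      exact ((MeasurableSet.const _).union (hF_mono hj.le _ (hA j)).compl).compl
    · simp
    · rintro ω ⟨k, hk, hkA⟩
      obtain ⟨h1, h2⟩ := (hfind ω k).1 hk
      have hkN : k = N := h1.resolve_right (not_not.2 hkA)
      subst hkN
      intro j hj
      rcases hj.eq_or_lt with rfl | hlt
      · exact hkA
      · by_contra hc
        exact h2 j hlt (Or.inr hc)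
  have hI : (⋂ k : ℕ+, A k) = ⋂ N : ℕ+, {ω | ∀ k ≤ N, ω ∈ A k} := by
    ext ω
    simp only [Set.mem_iInter, Set.mem_ofPred_eq]
    exact ⟨fun H N k _ => H k, fun H k => H k k le_rfl⟩
  have hanti : Antitone fun N : ℕ+ => {ω | ∀ k ≤ N, ω ∈ A k} :=
    fun a b hab ω H k hk => H k (hk.trans hab)
  have hmeas : ∀ N : ℕ+, MeasurableSet {ω | ∀ k ≤ N, ω ∈ A k} := by
    intro N
    have : {ω | ∀ k ≤ N, ω ∈ A k} = ⋂ k : ℕ+, ⋂ _ : k ≤ N, A k := by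
      ext ω
      simp
    rw [this]
    exact MeasurableSet.iInter fun k => MeasurableSet.iInter fun _ => hF_le k _ (hA k)
  rw [hI, hanti.measure_iInter (fun N => (hmeas N).nullMeasurableSet) ⟨1, measure_ne_top _ _⟩]
  exact le_iInf key
end
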